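/- arXiv:2502.13787 — 6 statements merged into one kernel-verified Lean document; each statement's English description precedes it below -/
import Mathlib

section
/- The hypergraph on the 24 vertices {1,2,3,4,5,6,7,8,B,E,F,G,H,K,N,R,S,U,V,W,a,b,d,e} with the 24 hyperedges 125E, 12NW, 15HK, 18BE, 25FG, 267E, 345E, 34NW, 3Nbd, 3SUW, 4Nae, 4RVW, 67HK, 6HVd, 6KSa, 7HUe, 7KRb, 8BFG, 8FVb, 8GUa, BFSe, BGRd, RVbd, SUae (the Peres 24-24 set) is a KS hypergraph, i.e., it admits no admissible {0,1}-assignment. -/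
def peres2424 : List (Finset ℕ) :=
  [{1, 2, 5, 14},
   {1, 2, 23, 32},
   {1, 5, 17, 20},
   {1, 8, 11, 14},
   {2, 5, 15, 16},
   {2, 6, 7, 14},
   {3, 4, 5, 14},
   {3, 4, 23, 32},
   {3, 23, 37, 39},
   {3, 28, 30, 32},
   {4, 23, 36, 40},
   {4, 27, 31, 32},
   {6, 7, 17, 20},
   {6, 17, 31, 39},
   {6, 20, 28, 36},
   {7, 17, 30, 40},
   {7, 20, 27, 37},
   {8, 11, 15, 16},
   {8, 15, 31, 37},
   {8, 16, 30, 36},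
   {11, 15, 28, 40},
   {11, 16, 27, 39},
   {27, 31, 37, 39},
   {28, 30, 36, 40}]

def admissible (E : List (Finset ℕ)) (f : ℕ → Bool) : Prop :=
  ∀ e ∈ E, (e.filter (fun v => f v = true)).card = 1

/-!
Nine of the 24 hyperedges already form a parity proof: every vertex lies in an even number (0 or 2)
of them. So if `f` is any assignment, counting the incidences between these nine hyperedges and the
vertices assigned 1 gives an even total. An admissible assignment contributes exactly one incidence
per hyperedge, which would make that total 9.
-/

section ParityProof

variable {α : Type*} [DecidableEq α] {C : Finset (Finset α)}

/-- A *parity proof* of the Kochen–Specker property: an odd number of hyperedges such that every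
vertex occurring in them lies in an even number of them. The vertex set is encoded as the union of
the hyperedges, so that the property is decidable even when `α` is infinite. -/
def IsParityProof (C : Finset (Finset α)) : Prop :=
  Odd C.card ∧ ∀ v ∈ C.biUnion id, Even (C.filter (v ∈ ·)).card

instance : DecidablePred (IsParityProof (α := α)) := fun _ => instDecidableAnd

theorem sum_card_filter_eq_sum_card_filter_mem (C : Finset (Finset α)) (p : α → Prop)
    [DecidablePred p] :
    ∑ e ∈ C, (e.filter p).card =
      ∑ v ∈ (C.biUnion id).filter p, (C.filter (v ∈ ·)).card := by
  have filter_eq_bipartiteAbove : ∀ e ∈ C,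
      e.filter p = ((C.biUnion id).filter p).bipartiteAbove (fun e v => v ∈ e) e := by
    intro e he
    ext v
    simp only [Finset.mem_bipartiteAbove, Finset.mem_filter, Finset.mem_biUnion, id]
    exact ⟨fun ⟨hv, hp⟩ => ⟨⟨⟨e, he, hv⟩, hp⟩, hv⟩, fun ⟨⟨_, hp⟩, hv⟩ => ⟨hv, hp⟩⟩
  calc ∑ e ∈ C, (e.filter p).card
      = ∑ e ∈ C, (((C.biUnion id).filter p).bipartiteAbove (fun e v => v ∈ e) e).card :=
        Finset.sum_congr rfl fun e he => congrArg Finset.card (filter_eq_bipartiteAbove e he)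
    _ = ∑ v ∈ (C.biUnion id).filter p, (C.filter (v ∈ ·)).card :=
        Finset.sum_card_bipartiteAbove_eq_sum_card_bipartiteBelow _

theorem IsParityProof.exists_even_card_filter (hC : IsParityProof C) (p : α → Prop)
    [DecidablePred p] : ∃ e ∈ C, Even (e.filter p).card := by
  by_contra! h
  have even_incidences : Even (∑ e ∈ C, (e.filter p).card) := by
    rw [sum_card_filter_eq_sum_card_filter_mem]
    exact Finset.even_sum _ fun v hv => hC.2 v (Finset.mem_filter.mp hv).1
  have odd_incidences : Odd (∑ e ∈ C, (e.filter p).card) := by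
    rw [Finset.odd_sum_iff_odd_card_odd,
      Finset.filter_true_of_mem fun e he => Nat.not_even_iff_odd.mp (h e he)]
    exact hC.1
  exact Nat.not_even_iff_odd.mpr odd_incidences even_incidences

end ParityProof

theorem IsParityProof.not_exists_admissible {C : Finset (Finset ℕ)} {E : List (Finset ℕ)}
    (hC : IsParityProof C) (hCE : ∀ e ∈ C, e ∈ E) : ¬ ∃ f : ℕ → Bool, admissible E f := by
  rintro ⟨f, hf⟩
  obtain ⟨e, he, heven⟩ := hC.exists_even_card_filter (fun v => f v = true)
  rw [hf e (hCE e he)] at heven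
  exact Nat.not_even_one heven

/-- A copy in the Peres set of the 18-vertex, 9-hyperedge set of Cabello, Estebaranz and
García-Alcaine, which serves as its parity proof: `12NW`, `15HK`, `25FG`, `3Nbd`, `3SUW`, `6HVd`,
`6KSa`, `8FVb`, `8GUa`. As in `peres2424`, a label stands for its position in the sequence
`1`, …, `9`, `A`, `B`, …, `Z`, `a`, `b`, …. -/
def cabello189 : Finset (Finset ℕ) :=
  {{1, 2, 23, 32},
   {1, 5, 17, 20},
   {2, 5, 15, 16},
   {3, 23, 37, 39},
   {3, 28, 30, 32},
   {6, 17, 31, 39},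
   {6, 20, 28, 36},
   {8, 15, 31, 37},
   {8, 16, 30, 36}}

theorem isParityProof_cabello189 : IsParityProof cabello189 := by
  decide

theorem mem_peres2424_of_mem_cabello189 : ∀ e ∈ cabello189, e ∈ peres2424 := by
  decide

theorem peres2424_is_KS : ¬ ∃ f : ℕ → Bool, admissible peres2424 f :=
  isParityProof_cabello189.not_exists_admissible mem_peres2424_of_mem_cabello189
end

section
/- The hypergraph on 18 vertices {1,...,9,A,...,I} with the 9 hyperedges 1234, 5678, 9ABC, DEC8, FGB7, HGA4, IE93, IF62, HD51 (the CEG 18-9 set) is a critical KS hypergraph: it admits no admissible {0,1}-assignment, and for every one of its 9 hyperedges, deleting that hyperedge yields a hypergraph that admits an admissible {0,1}-assignment. -/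
def ceg189 : List (Finset ℕ) :=
  [{1, 2, 3, 4},
   {5, 6, 7, 8},
   {9, 10, 11, 12},
   {13, 14, 12, 8},
   {15, 16, 11, 7},
   {17, 16, 10, 4},
   {18, 14, 9, 3},
   {18, 15, 6, 2},
   {17, 13, 5, 1}]

/-!
Call hyperedges adjacent when they share a vertex. Every vertex of the CEG set lies in exactly two
hyperedges, so an assignment that hits every hyperedge exactly once would force the number of
hyperedges to be even; but there are nine.

On the other hand, the nine hyperedges can be arranged in a cycle in which consecutive ones share a
vertex. Deleting a hyperedge turns this cycle into a path of eight, and assigning 1 to every second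
shared vertex along the path hits each of the eight exactly once.
-/

open Finset

section DoubleCounting

variable {ι α : Type*} [DecidableEq α]

theorem sum_card_filter_eq_sum_card_filter_mem_s1 [Fintype ι] (e : ι → Finset α)
    (p : α → Prop) [DecidablePred p] :
    ∑ i, #{v ∈ e i | p v} = ∑ v ∈ univ.biUnion e with p v, #{i | v ∈ e i} := by
  have above (i : ι) : {v ∈ e i | p v} =
      bipartiteAbove (fun i v ↦ v ∈ e i) {v ∈ univ.biUnion e | p v} i := by
    ext v
    simp only [bipartiteAbove, mem_filter, mem_biUnion, mem_univ, true_and]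
    tauto
  simp only [above]
  exact sum_card_bipartiteAbove_eq_sum_card_bipartiteBelow _

theorem dvd_card_of_dvd_degree_of_card_filter_eq_one [Fintype ι] {e : ι → Finset α} {d : ℕ}
    (hdeg : ∀ i, ∀ v ∈ e i, d ∣ #{j | v ∈ e j})
    {p : α → Prop} [DecidablePred p] (hp : ∀ i, #{v ∈ e i | p v} = 1) :
    d ∣ Fintype.card ι := by
  have card_eq : Fintype.card ι = ∑ v ∈ univ.biUnion e with p v, #{i | v ∈ e i} := by
    simp only [← sum_card_filter_eq_sum_card_filter_mem_s1, hp, Fintype.card_eq_sum_ones]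
  rw [card_eq]
  refine dvd_sum fun v hv ↦ ?_
  obtain ⟨i, -, hvi⟩ := mem_biUnion.mp (mem_filter.mp hv).1
  exact hdeg i v hvi

end DoubleCounting

theorem exists_card_filter_eq_one_of_ne_of_cycle {α : Type*} {n : ℕ} [NeZero n]
    {e : Fin n → Finset α} {v : Fin n → α}
    (hv : ∀ i j, v i ∈ e j ↔ j = i ∨ j = i + 1) (k : Fin n) :
    ∃ f : α → Bool, ∀ j ≠ k, #{x ∈ e j | f x = true} = 1 := by
  classical
  let selected (x : α) : Prop := ∃ i, v i = x ∧ Odd (i - k).val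
  refine ⟨fun x ↦ decide (selected x), fun j hjk ↦ ?_⟩
  simp only [decide_eq_true_eq]
  have mem_edge_iff (i : Fin n) : v i ∈ e j ↔ i = j ∨ i = j - 1 := by
    rw [hv, eq_sub_iff_add_eq, eq_comm (a := j), eq_comm (a := j)]
  have offset_ne_zero : j - k ≠ 0 := sub_ne_zero.mpr hjk
  have odd_pred_iff : Odd (j - 1 - k).val ↔ Even (j - k).val := by
    rw [sub_right_comm, Fin.val_sub_one_of_ne_zero offset_ne_zero,
      Nat.odd_sub (Nat.one_le_iff_ne_zero.mpr (Fin.val_ne_zero_iff.mpr offset_ne_zero))]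
    simp
  have mem_selected_iff (x : α) : x ∈ e j ∧ selected x ↔
      x = v j ∧ Odd (j - k).val ∨ x = v (j - 1) ∧ Even (j - k).val := by
    constructor
    · rintro ⟨hx, i, rfl, hi⟩
      obtain rfl | rfl := (mem_edge_iff i).mp hx
      · exact .inl ⟨rfl, hi⟩
      · exact .inr ⟨rfl, odd_pred_iff.mp hi⟩
    · rintro (⟨rfl, hodd⟩ | ⟨rfl, heven⟩)
      · exact ⟨(mem_edge_iff j).mpr (.inl rfl), j, rfl, hodd⟩
      · exact ⟨(mem_edge_iff (j - 1)).mpr (.inr rfl), j - 1, rfl, odd_pred_iff.mpr heven⟩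
  rw [card_eq_one]
  obtain heven | hodd := Nat.even_or_odd (j - k).val
  · refine ⟨v (j - 1), ?_⟩
    ext x
    simp [mem_selected_iff, heven, Nat.not_odd_iff_even.mpr heven]
  · refine ⟨v j, ?_⟩
    ext x
    simp [mem_selected_iff, hodd, Nat.not_even_iff_odd.mpr hodd]

/-- The nine hyperedges of `ceg189`, reordered along a Hamiltonian cycle: cyclically consecutive
hyperedges share a vertex. -/
def ceg189CycleEdge : Fin 9 → Finset ℕ :=
  ![{1, 2, 3, 4},
    {18, 15, 6, 2},
    {15, 16, 11, 7},
    {17, 16, 10, 4},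
    {9, 10, 11, 12},
    {18, 14, 9, 3},
    {13, 14, 12, 8},
    {5, 6, 7, 8},
    {17, 13, 5, 1}]

/-- The vertices along the Hamiltonian cycle: the `i`-th one is shared by the `i`-th hyperedge and
its cyclic successor. -/
def ceg189CycleVertex : Fin 9 → ℕ :=
  ![2, 15, 16, 10, 9, 14, 8, 5, 1]

theorem mem_ceg189_iff_exists_cycleEdge {e : Finset ℕ} :
    e ∈ ceg189 ↔ ∃ i, ceg189CycleEdge i = e := by
  constructor
  · revert e
    decide
  · rintro ⟨i, rfl⟩
    revert i
    decide

theorem card_ceg189CycleEdge_mem_eq_two :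
    ∀ i, ∀ v ∈ ceg189CycleEdge i, #{j | v ∈ ceg189CycleEdge j} = 2 := by
  decide

theorem ceg189CycleVertex_mem_cycleEdge_iff :
    ∀ i j, ceg189CycleVertex i ∈ ceg189CycleEdge j ↔ j = i ∨ j = i + 1 := by
  decide

theorem ceg189_critical_KS :
    (¬ ∃ f : ℕ → Bool, admissible ceg189 f) ∧
    ∀ e ∈ ceg189, ∃ f : ℕ → Bool,
      ∀ e' ∈ ceg189, e' ≠ e → (e'.filter (fun v => f v = true)).card = 1 := by
  refine ⟨fun ⟨f, hf⟩ ↦ ?_, fun e he ↦ ?_⟩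
  · have even_card : 2 ∣ Fintype.card (Fin 9) :=
      dvd_card_of_dvd_degree_of_card_filter_eq_one
        (fun i v hv ↦ (card_ceg189CycleEdge_mem_eq_two i v hv).symm.dvd)
        (fun i ↦ hf _ (mem_ceg189_iff_exists_cycleEdge.mpr ⟨i, rfl⟩))
    norm_num at even_card
  · obtain ⟨k, rfl⟩ := mem_ceg189_iff_exists_cycleEdge.mp he
    obtain ⟨f, hf⟩ :=
      exists_card_filter_eq_one_of_ne_of_cycle ceg189CycleVertex_mem_cycleEdge_iff k
    refine ⟨f, fun e' he' hne ↦ ?_⟩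
    obtain ⟨j, rfl⟩ := mem_ceg189_iff_exists_cycleEdge.mp he'
    exact hf j (ne_of_apply_ne _ hne)
end

section
/- The hypergraph on 20 vertices {1,...,9,A,...,K} with the 11 hyperedges 1234, 5674, 8973, ABC9, DEC8, FGE6, HGB5, IJE2, KJB1, IFDE, KHAB (the Kernaghan 20-11 set) is a critical KS hypergraph: it admits no admissible {0,1}-assignment, and for every one of its 11 hyperedges, deleting that hyperedge yields a hypergraph that admits an admissible {0,1}-assignment. -/
/-!
Counting incidences between the vertices assigned `1` and the hyperedges in two ways shows that an
admissible assignment forces the number of hyperedges to be even as soon as every vertex lies in an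
even number of them. Here there are eleven hyperedges, while two vertices (`B` and `E`, encoded as
`11` and `14`) lie in four of them and the other eighteen in two.

The same count suggests how to look for the assignments that show criticality: one vertex lying in
four hyperedges and three vertices lying in two account for `4 + 3 * 2 = 10` incidences, so if no
two of them share a hyperedge, then they meet all but one of the hyperedges, each exactly once.
-/

def kernaghan2011 : List (Finset ℕ) :=
  [{1, 2, 3, 4},
   {5, 6, 7, 4},
   {8, 9, 7, 3},
   {10, 11, 12, 9},
   {13, 14, 12, 8},
   {15, 16, 14, 6},
   {17, 16, 11, 5},
   {18, 19, 14, 2},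
   {20, 19, 11, 1},
   {18, 15, 13, 14},
   {20, 17, 10, 11}]

open Finset

section VertexDegree

variable {α : Type*} [DecidableEq α]

/-- The degree of the vertex `v` in the hypergraph with hyperedges `E`: the number of entries of `E`
containing `v`, repeated hyperedges being counted with multiplicity. -/
def vertexDegree (E : List (Finset α)) (v : α) : ℕ :=
  E.countP (v ∈ ·)

theorem sum_card_filter_eq_sum_vertexDegree {E : List (Finset α)} {V : Finset α}
    (hV : ∀ e ∈ E, e ⊆ V) (p : α → Prop) [DecidablePred p] :
    (E.map fun e => #{v ∈ e | p v}).sum = ∑ v ∈ V with p v, vertexDegree E v := by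
  induction E with
  | nil => simp [vertexDegree]
  | cons e E ih =>
    obtain ⟨heV, hEV⟩ := List.forall_mem_cons.1 hV
    have card_eq_sum : #{v ∈ e | p v} = ∑ v ∈ V with p v, if v ∈ e then 1 else 0 := by
      have filter_eq : {v ∈ e | p v} = {v ∈ {v ∈ V | p v} | v ∈ e} := by
        grind
      rw [filter_eq, card_filter]
    simp only [List.map_cons, List.sum_cons, ih hEV, card_eq_sum, vertexDegree, List.countP_cons,
      sum_add_distrib, decide_eq_true_eq, add_comm]

theorem even_sum_card_filter {E : List (Finset α)} (hE : ∀ v, Even (vertexDegree E v))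
    (p : α → Prop) [DecidablePred p] : Even (E.map fun e => #{v ∈ e | p v}).sum := by
  have subset_biUnion : ∀ e ∈ E, e ⊆ E.toFinset.biUnion id := fun e he =>
    subset_biUnion_of_mem id (List.mem_toFinset.2 he)
  rw [sum_card_filter_eq_sum_vertexDegree subset_biUnion]
  exact even_sum _ fun v _ => hE v

end VertexDegree

theorem admissible.even_length {E : List (Finset ℕ)} {f : ℕ → Bool} (hf : admissible E f)
    (hE : ∀ v, Even (vertexDegree E v)) : Even E.length := by
  have sum_eq_length : (E.map fun e => #{v ∈ e | f v = true}).sum = E.length := by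
    rw [List.map_congr_left hf]
    simp
  exact sum_eq_length ▸ even_sum_card_filter hE (f · = true)

theorem vertexDegree_kernaghan2011 (v : ℕ) :
    vertexDegree kernaghan2011 v =
      if v = 11 ∨ v = 14 then 4 else if v ∈ Icc 1 20 then 2 else 0 := by
  obtain hv | hv := lt_or_ge v 21
  · revert v
    decide
  · have notMem : ∀ e ∈ kernaghan2011, v ∉ e := fun e he hve =>
      hv.not_gt ((by decide : ∀ e ∈ kernaghan2011, ∀ v ∈ e, v < 21) e he v hve)
    rw [vertexDegree, List.countP_eq_zero.2 (by simpa using notMem)]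
    simp only [mem_Icc]
    split_ifs <;> omega

theorem even_vertexDegree_kernaghan2011 (v : ℕ) : Even (vertexDegree kernaghan2011 v) := by
  rw [vertexDegree_kernaghan2011]
  split_ifs <;> decide

/-- Sets of vertices to be assigned `1`, in the order of `kernaghan2011`: the `i`-th set is disjoint
from the `i`-th hyperedge and meets each of the other ten in exactly one vertex. -/
def kernaghan2011NearTransversals : List (Finset ℕ) :=
  [{5, 9, 14, 20},
   {1, 9, 14, 17},
   {1, 5, 10, 14},
   {1, 7, 14, 17},
   {2, 7, 11, 15},
   {2, 7, 11, 13},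
   {1, 7, 10, 14},
   {3, 6, 11, 13},
   {3, 5, 10, 14},
   {2, 6, 8, 11},
   {1, 5, 9, 14}]

theorem exists_nearTransversal_admissible_filter_ne :
    ∀ e ∈ kernaghan2011, ∃ S ∈ kernaghan2011NearTransversals,
      admissible (kernaghan2011.filter (· ≠ e)) (fun v => decide (v ∈ S)) := by
  unfold admissible
  decide

theorem kernaghan2011_critical_KS :
    (¬ ∃ f : ℕ → Bool, admissible kernaghan2011 f) ∧
    ∀ e ∈ kernaghan2011, ∃ f : ℕ → Bool,
      ∀ e' ∈ kernaghan2011, e' ≠ e → (e'.filter (fun v => f v = true)).card = 1 := by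
  constructor
  · rintro ⟨f, hf⟩
    have even_eleven : Even 11 := hf.even_length even_vertexDegree_kernaghan2011
    exact absurd even_eleven (by decide)
  · intro e he
    obtain ⟨S, -, hS⟩ := exists_nearTransversal_admissible_filter_ne e he
    exact ⟨fun v => decide (v ∈ S), fun e' he' hne =>
      hS e' (List.mem_filter.2 ⟨he', decide_eq_true hne⟩)⟩
end

section
/- The hypergraph on 34 vertices {1,...,9,A,...,Y} with the 9 hyperedges 12345678, 9ABCDEFG, HIJKLMFG, NOPQME78, RSTULD56, VWXUKC46, XTPQJB36, YVWOIA28, YRSNH918 (the first 34-9 set in dimension 8) is a critical KS hypergraph: it admits no admissible {0,1}-assignment, and for every one of its 9 hyperedges, deleting that hyperedge yields a hypergraph that admits an admissible {0,1}-assignment. -/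
def ks349a : List (Finset ℕ) :=
  [{1, 2, 3, 4, 5, 6, 7, 8},
   {9, 10, 11, 12, 13, 14, 15, 16},
   {17, 18, 19, 20, 21, 22, 15, 16},
   {23, 24, 25, 26, 22, 14, 7, 8},
   {27, 28, 29, 30, 21, 13, 5, 6},
   {31, 32, 33, 30, 20, 12, 4, 6},
   {33, 29, 25, 26, 19, 11, 3, 6},
   {34, 31, 32, 24, 18, 10, 2, 8},
   {34, 27, 28, 23, 17, 9, 1, 8}]

/-!
Every vertex lies on an even number of hyperedges, so counting the incidences between hyperedges
and vertices assigned `1` gives an even number, whereas an admissible assignment would give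
exactly one incidence for each of the nine hyperedges. For criticality, all nine hyperedges can be
arranged in a cycle whose consecutive members share a vertex of degree two; deleting one hyperedge
leaves a path of eight, and assigning `1` to every second joining vertex along it hits each of them
once.
-/

section Hypergraph

variable {α : Type*}

/-- The number of hyperedges of `E` through `v`, counted with multiplicity. -/
def degree [DecidableEq α] (E : List (Finset α)) (v : α) : ℕ :=
  E.countP (v ∈ ·)

theorem sum_degree_eq_sum_card_inter [DecidableEq α] (E : List (Finset α)) (S : Finset α) :
    ∑ v ∈ S, degree E v = (E.map fun e => (S ∩ e).card).sum := by
  induction E with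
  | nil => simp [degree]
  | cons e E ih =>
    have degree_cons (v : α) : degree (e :: E) v = (if v ∈ e then 1 else 0) + degree E v := by
      simp [degree, List.countP_cons, add_comm]
    simp only [degree_cons, Finset.sum_add_distrib, ← Finset.card_filter,
      Finset.filter_mem_eq_inter, ih, List.map_cons, List.sum_cons]

theorem even_length_of_even_degree [DecidableEq α] {E : List (Finset α)}
    (hdeg : ∀ e ∈ E, ∀ v ∈ e, Even (degree E v)) {f : α → Bool}
    (hf : ∀ e ∈ E, (e.filter fun v => f v = true).card = 1) : Even E.length := by
  let S := (E.toFinset.biUnion id).filter fun v => f v = true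
  have mem_S {v : α} : v ∈ S ↔ (∃ e ∈ E, v ∈ e) ∧ f v = true := by simp [S]
  have card_S_inter : ∀ e ∈ E, (S ∩ e).card = 1 := by
    intro e he
    rw [← hf e he]
    congr 1
    ext v
    rw [Finset.mem_inter, mem_S, Finset.mem_filter]
    exact ⟨fun h => ⟨h.2, h.1.2⟩, fun h => ⟨⟨⟨e, he, h.1⟩, h.2⟩, h.1⟩⟩
  have length_eq : E.length = ∑ v ∈ S, degree E v := by
    rw [sum_degree_eq_sum_card_inter, List.map_congr_left card_S_inter]
    simp
  rw [length_eq]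
  refine Finset.even_sum _ fun v hv => ?_
  obtain ⟨⟨e, he, hve⟩, -⟩ := mem_S.mp hv
  exact hdeg e he v hve

theorem odd_val_sub_one_iff {n : ℕ} [NeZero n] {i : Fin n} (hi : i ≠ 0) :
    Odd (i - 1).val ↔ ¬ Odd i.val := by
  have val_pos : 1 ≤ i.val := Nat.one_le_iff_ne_zero.mpr (Fin.val_ne_zero_iff.mpr hi)
  have val_eq : (i - 1).val + 1 = i.val := by
    rw [Fin.val_sub_one_of_ne_zero hi, Nat.sub_add_cancel val_pos]
  rw [← val_eq, Nat.odd_add_one, not_not]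

/-- A cyclic sequence of hyperedges in which `e i` and `e (i + 1)` are joined by a vertex `v i`
lying on no other `e j`. Indices are taken modulo `n`, through the arithmetic of `Fin n`. -/
def IsInducedBergeCycle {n : ℕ} [NeZero n] (e : Fin n → Finset α) (v : Fin n → α) : Prop :=
  ∀ i j, v i ∈ e j ↔ j = i ∨ j = i + 1

theorem IsInducedBergeCycle.exists_card_filter_eq_one {n : ℕ} [NeZero n]
    {e : Fin n → Finset α} {v : Fin n → α} (hev : IsInducedBergeCycle e v) (i : Fin n) :
    ∃ f : α → Bool, ∀ j, j ≠ i → ((e j).filter fun x => f x = true).card = 1 := by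
  classical
  -- Following the cycle from `e i`, skip the first joining vertex and select every second one.
  refine ⟨fun x => decide (∃ a, Odd (a - i).val ∧ v a = x), fun j hji => ?_⟩
  have parity : Odd (j - 1 - i).val ↔ ¬ Odd (j - i).val := by
    rw [sub_right_comm]
    exact odd_val_sub_one_iff (sub_ne_zero.mpr hji)
  obtain ⟨b, hb, hbj, unique⟩ : ∃ b, Odd (b - i).val ∧ v b ∈ e j ∧
      ∀ a, Odd (a - i).val → v a ∈ e j → a = b := by
    simp only [hev _ j, ← sub_eq_iff_eq_add]
    by_cases hj : Odd (j - i).val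
    · exact ⟨j, hj, .inl rfl, by grind⟩
    · exact ⟨j - 1, parity.mpr hj, .inr rfl, by grind⟩
  refine Finset.card_eq_one.mpr ⟨v b, ?_⟩
  ext x
  simp only [Finset.mem_filter, decide_eq_true_eq, Finset.mem_singleton]
  constructor
  · rintro ⟨hxj, a, ha, rfl⟩
    rw [unique a ha hxj]
  · rintro rfl
    exact ⟨hbj, b, hb, rfl⟩

end Hypergraph

/-- The hyperedges of `ks349a`, reordered so that cyclically consecutive ones share a vertex of
degree two. -/
def ks349aCycle (i : Fin 9) : Finset ℕ :=
  ks349a.get (![(0 : Fin 9), 3, 6, 2, 1, 4, 5, 7, 8] i)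

/-- The vertices of degree two joining consecutive hyperedges of `ks349aCycle`. -/
def ks349aCycleVertex : Fin 9 → ℕ :=
  ![7, 25, 19, 15, 13, 30, 31, 34, 1]

theorem isInducedBergeCycle_ks349aCycle :
    IsInducedBergeCycle ks349aCycle ks349aCycleVertex := by
  unfold IsInducedBergeCycle
  decide

theorem exists_ks349aCycle_eq : ∀ e ∈ ks349a, ∃ i, ks349aCycle i = e := by
  decide

theorem even_degree_ks349a : ∀ e ∈ ks349a, ∀ v ∈ e, Even (degree ks349a v) := by
  decide

theorem ks349a_critical_KS :
    (¬ ∃ f : ℕ → Bool, admissible ks349a f) ∧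
    ∀ e ∈ ks349a, ∃ f : ℕ → Bool,
      ∀ e' ∈ ks349a, e' ≠ e → (e'.filter (fun v => f v = true)).card = 1 := by
  constructor
  · rintro ⟨f, hf⟩
    have even_nine : Even 9 := even_length_of_even_degree even_degree_ks349a hf
    exact absurd even_nine (by decide)
  · intro e he
    obtain ⟨i, rfl⟩ := exists_ks349aCycle_eq e he
    obtain ⟨f, hf⟩ := isInducedBergeCycle_ks349aCycle.exists_card_filter_eq_one i
    refine ⟨f, fun e' he' hne => ?_⟩
    obtain ⟨j, rfl⟩ := exists_ks349aCycle_eq e' he'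
    exact hf j fun hji => hne (congrArg ks349aCycle hji)
end

section
/- Let (V,E) be a hypergraph and let e ∈ E be a hyperedge with at least 2 vertices such that at most one vertex of e belongs to the union of the other hyperedges (all remaining vertices of e lie in no other hyperedge). Then (V,E) admits an admissible {0,1}-assignment if and only if (V, E \ {e}) admits an admissible {0,1}-assignment. In particular, a hyperedge attached to the rest of the hypergraph by just one vertex is structurally irrelevant for the existence of an admissible assignment. -/
/-!
Some vertex of a dangling hyperedge `e` lies in no other hyperedge. Given an admissible assignment
of the other hyperedges, let `y` be the shared vertex of `e` if it exists and is assigned `1`, and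
such a private vertex otherwise. Making `y` the only vertex of `e` assigned `1` changes values at
private vertices only, so the other hyperedges are unaffected.
-/

open Set

section

variable {V : Type*}

/-- Admissibility of a `{0,1}`-assignment for a family of hyperedges: every hyperedge contains
exactly one vertex assigned `1`. Values `0` and `1` are encoded as `Bool`, and neither the family
nor its hyperedges need be finite. -/
def IsAdmissible (f : V → Bool) (F : Set (Set V)) : Prop :=
  ∀ e ∈ F, ∃! v, v ∈ e ∧ f v = true

namespace IsAdmissible

variable {f g : V → Bool} {F G : Set (Set V)}

theorem mono (hf : IsAdmissible f G) (hFG : F ⊆ G) : IsAdmissible f F :=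
  fun e he => hf e (hFG he)

theorem congr (hf : IsAdmissible f F) (hfg : EqOn f g (⋃₀ F)) : IsAdmissible g F := by
  intro e he
  refine (existsUnique_congr fun v => and_congr_right fun hv => ?_).1 (hf e he)
  rw [hfg (mem_sUnion_of_mem hv he)]

end IsAdmissible

theorem not_subset_of_nontrivial_of_inter_subsingleton {s t : Set V} (hs : s.Nontrivial)
    (hst : (s ∩ t).Subsingleton) : ¬s ⊆ t :=
  fun hsub => hs.not_subsingleton (inter_eq_left.2 hsub ▸ hst)

theorem exists_mem_forall_inter_eq_true_iff_eq {e U : Set V} (hshared : (e ∩ U).Subsingleton)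
    (hprivate : ¬e ⊆ U) (f : V → Bool) :
    ∃ y ∈ e, ∀ v ∈ e ∩ U, f v = true ↔ v = y := by
  by_cases hx : ∃ x ∈ e ∩ U, f x = true
  · obtain ⟨x, hx, hfx⟩ := hx
    refine ⟨x, hx.1, fun v hv => ?_⟩
    obtain rfl := hshared hv hx
    exact iff_of_true hfx rfl
  · obtain ⟨w, hwe, hwU⟩ := not_subset.1 hprivate
    exact ⟨w, hwe, fun v hv =>
      iff_of_false (fun hfv => hx ⟨v, hv, hfv⟩) (ne_of_mem_of_not_mem hv.2 hwU)⟩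

theorem dangling_edge_irrelevant_general {F : Set (Set V)} {e : Set V}
    (hshared : (e ∩ ⋃₀ F).Subsingleton) (hprivate : ¬e ⊆ ⋃₀ F) :
    (∃ f, IsAdmissible f (insert e F)) ↔ ∃ f, IsAdmissible f F := by
  classical
  refine ⟨fun ⟨f, hf⟩ => ⟨f, hf.mono (subset_insert e F)⟩, fun ⟨f, hf⟩ => ?_⟩
  obtain ⟨y, hye, hy⟩ := exists_mem_forall_inter_eq_true_iff_eq hshared hprivate f
  let g : V → Bool := e.piecewise (fun v => decide (v = y)) f
  have hge : ∀ v ∈ e, g v = true ↔ v = y := fun v hv => by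
    simp only [g, piecewise_eq_of_mem e _ _ hv, decide_eq_true_eq]
  have hfg : EqOn f g (⋃₀ F) := fun v hv => by
    by_cases hve : v ∈ e
    · exact Bool.eq_iff_iff.2 ((hy v ⟨hve, hv⟩).trans (hge v hve).symm)
    · exact (piecewise_eq_of_notMem e _ _ hve).symm
  have hg_edge : ∃! v, v ∈ e ∧ g v = true :=
    ⟨y, ⟨hye, (hge y hye).2 rfl⟩, fun v hv => (hge v hv.1).1 hv.2⟩
  exact ⟨g, forall_mem_insert.2 ⟨hg_edge, hf.congr hfg⟩⟩

theorem isAdmissible_image_coe_iff (f : V → Bool) (E : Set (Finset V)) :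
    IsAdmissible f ((↑) '' E) ↔ ∀ e ∈ E, (e.filter (fun v => f v = true)).card = 1 := by
  simp only [IsAdmissible, forall_mem_image, Finset.mem_coe,
    Finset.card_eq_one_iff_existsUnique, Finset.mem_filter]

theorem subsingleton_coe_inter_sUnion_iff_card_inter_sup_le_one [DecidableEq V] (e : Finset V)
    (E : Finset (Finset V)) :
    ((e : Set V) ∩ ⋃₀ ((↑) '' (E : Set (Finset V)) : Set (Set V))).Subsingleton ↔
      (e ∩ E.sup id).card ≤ 1 := by
  have hsup : ((E.sup id : Finset V) : Set V) =
      ⋃₀ ((↑) '' (E : Set (Finset V)) : Set (Set V)) := by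
    ext v
    simp only [Finset.mem_coe, Finset.mem_sup, id_eq, sUnion_image, mem_iUnion, exists_prop]
  rw [Finset.card_le_one_iff_subsingleton, Finset.coe_inter, hsup]

end

theorem dangling_edge_irrelevant {V : Type*} [DecidableEq V]
    (E : Finset (Finset V)) (e : Finset V) (he : e ∈ E) (hcard : 2 ≤ e.card)
    (hshared : (e ∩ (E.erase e).sup id).card ≤ 1) :
    (∃ f : V → Bool, ∀ e' ∈ E, (e'.filter (fun v => f v = true)).card = 1) ↔
    (∃ f : V → Bool, ∀ e' ∈ E.erase e, (e'.filter (fun v => f v = true)).card = 1) := by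
  have hsub := (subsingleton_coe_inter_sUnion_iff_card_inter_sup_le_one e (E.erase e)).2 hshared
  have hprivate := not_subset_of_nontrivial_of_inter_subsingleton
    (Finset.one_lt_card_iff_nontrivial.1 hcard) hsub
  simpa only [← image_insert_eq, ← Finset.coe_insert, Finset.insert_erase he,
    isAdmissible_image_coe_iff, Finset.mem_coe] using dangling_edge_irrelevant_general hsub hprivate
end

section
/- Let ω = e^{2πi/3} ∈ ℂ. Define the 40 vectors in ℂ^4: 1=(0,0,0,1), 2=(0,1,1,1), 3=(0,0,1,0), 4=(1,-1,1,0), 5=(ω,1,0,-1), 6=(ω,0,-1,1), 7=(0,1,0,0), 8=(1,0,-1,1), 9=(1,ω,0,-1), A=(ω²,-1,ω,0), B=(-1,ω,-1,0), C=(0,1,ω,ω²), D=(ω,ω²,0,-1), E=(1,0,-1,ω), F=(ω²,0,-1,ω), G=(-1,-1,0,ω²), H=(1,0,-1,ω²), I=(-1,ω²,-1,0), J=(ω²,-1,1,0), K=(ω²,1,0,-1), L=(ω,-1,1,0), M=(1,0,0,0), N=(1,1,0,-1), O=(-1,-1,0,ω), P=(ω,-1,ω²,0), Q=(1,-1,ω²,0),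 R=(ω²,0,-1,1), S=(1,ω²,0,-1), T=(0,1,1,ω²), U=(0,1,ω,1), V=(1,-1,ω,0), W=(0,1,ω²,ω), X=(ω²,ω,0,-1), Y=(0,1,1,ω), Z=(0,1,ω²,1), a=(0,ω,1,1), b=(-1,0,ω²,-1), c=(0,ω²,1,1), d=(-1,0,ω,-1), e=(ω,0,-1,ω²). For each of the 40 quadruples 248N, 359O, 6ADc, 67Ed, 78Fe, 89Ba, BDHW, BEKZ, 1BLV, 9ACb, 4EOY, 3GKS, 4GHT, 7HRb, 5HIU, 8ISc, CEIX, 1IJQ, 2JKR, 9JTd, DFJY, 256L, LSYb, LTXe, 137M, 2CMW, MTZc, MUYa, 3DNX, 14AP, 5FPZ, PRXa, PSWd, 6GQa, NQZb, OQWe, AKUe, CFGV, NUVd, ORVc, the four corresponding vectors are nonzero and pairwise orthogonal with respect to the standard Hermitian inner product on ℂ^4. -/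
noncomputable def ω : ℂ := Complex.exp (2 * Real.pi * Complex.I / 3)

noncomputable def hdot (u v : Fin 4 → ℂ) : ℂ := ∑ i, (starRingEnd ℂ) (u i) * v i

noncomputable def v1 : Fin 4 → ℂ := ![0, 0, 0, 1]
noncomputable def v2 : Fin 4 → ℂ := ![0, 1, 1, 1]
noncomputable def v3 : Fin 4 → ℂ := ![0, 0, 1, 0]
noncomputable def v4 : Fin 4 → ℂ := ![1, (-1), 1, 0]
noncomputable def v5 : Fin 4 → ℂ := ![ω, 1, 0, (-1)]
noncomputable def v6 : Fin 4 → ℂ := ![ω, 0, (-1), 1]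
noncomputable def v7 : Fin 4 → ℂ := ![0, 1, 0, 0]
noncomputable def v8 : Fin 4 → ℂ := ![1, 0, (-1), 1]
noncomputable def v9 : Fin 4 → ℂ := ![1, ω, 0, (-1)]
noncomputable def vA : Fin 4 → ℂ := ![ω^2, (-1), ω, 0]
noncomputable def vB : Fin 4 → ℂ := ![(-1), ω, (-1), 0]
noncomputable def vC : Fin 4 → ℂ := ![0, 1, ω, ω^2]
noncomputable def vD : Fin 4 → ℂ := ![ω, ω^2, 0, (-1)]
noncomputable def vE : Fin 4 → ℂ := ![1, 0, (-1), ω]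
noncomputable def vF : Fin 4 → ℂ := ![ω^2, 0, (-1), ω]
noncomputable def vG : Fin 4 → ℂ := ![(-1), (-1), 0, ω^2]
noncomputable def vH : Fin 4 → ℂ := ![1, 0, (-1), ω^2]
noncomputable def vI : Fin 4 → ℂ := ![(-1), ω^2, (-1), 0]
noncomputable def vJ : Fin 4 → ℂ := ![ω^2, (-1), 1, 0]
noncomputable def vK : Fin 4 → ℂ := ![ω^2, 1, 0, (-1)]
noncomputable def vL : Fin 4 → ℂ := ![ω, (-1), 1, 0]
noncomputable def vM : Fin 4 → ℂ := ![1, 0, 0, 0]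
noncomputable def vN : Fin 4 → ℂ := ![1, 1, 0, (-1)]
noncomputable def vO : Fin 4 → ℂ := ![(-1), (-1), 0, ω]
noncomputable def vP : Fin 4 → ℂ := ![ω, (-1), ω^2, 0]
noncomputable def vQ : Fin 4 → ℂ := ![1, (-1), ω^2, 0]
noncomputable def vR : Fin 4 → ℂ := ![ω^2, 0, (-1), 1]
noncomputable def vS : Fin 4 → ℂ := ![1, ω^2, 0, (-1)]
noncomputable def vT : Fin 4 → ℂ := ![0, 1, 1, ω^2]
noncomputable def vU : Fin 4 → ℂ := ![0, 1, ω, 1]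
noncomputable def vV : Fin 4 → ℂ := ![1, (-1), ω, 0]
noncomputable def vW : Fin 4 → ℂ := ![0, 1, ω^2, ω]
noncomputable def vX : Fin 4 → ℂ := ![ω^2, ω, 0, (-1)]
noncomputable def vY : Fin 4 → ℂ := ![0, 1, 1, ω]
noncomputable def vZ : Fin 4 → ℂ := ![0, 1, ω^2, 1]
noncomputable def va : Fin 4 → ℂ := ![0, ω, 1, 1]
noncomputable def vb : Fin 4 → ℂ := ![(-1), 0, ω^2, (-1)]
noncomputable def vc : Fin 4 → ℂ := ![0, ω^2, 1, 1]
noncomputable def vd : Fin 4 → ℂ := ![(-1), 0, ω, (-1)]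
noncomputable def ve : Fin 4 → ℂ := ![ω, 0, (-1), ω^2]

noncomputable def tuples : List (List (Fin 4 → ℂ)) :=
  [[v2, v4, v8, vN],
   [v3, v5, v9, vO],
   [v6, vA, vD, vc],
   [v6, v7, vE, vd],
   [v7, v8, vF, ve],
   [v8, v9, vB, va],
   [vB, vD, vH, vW],
   [vB, vE, vK, vZ],
   [v1, vB, vL, vV],
   [v9, vA, vC, vb],
   [v4, vE, vO, vY],
   [v3, vG, vK, vS],
   [v4, vG, vH, vT],
   [v7, vH, vR, vb],
   [v5, vH, vI, vU],
   [v8, vI, vS, vc],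
   [vC, vE, vI, vX],
   [v1, vI, vJ, vQ],
   [v2, vJ, vK, vR],
   [v9, vJ, vT, vd],
   [vD, vF, vJ, vY],
   [v2, v5, v6, vL],
   [vL, vS, vY, vb],
   [vL, vT, vX, ve],
   [v1, v3, v7, vM],
   [v2, vC, vM, vW],
   [vM, vT, vZ, vc],
   [vM, vU, vY, va],
   [v3, vD, vN, vX],
   [v1, v4, vA, vP],
   [v5, vF, vP, vZ],
   [vP, vR, vX, va],
   [vP, vS, vW, vd],
   [v6, vG, vQ, va],
   [vN, vQ, vZ, vb],
   [vO, vQ, vW, ve],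
   [vA, vK, vU, ve],
   [vC, vF, vG, vV],
   [vN, vU, vV, vd],
   [vO, vR, vV, vc]]

/-! Every entry of the vectors is `0` or `±ω ^ k`, so an inner product of two of them is
`m₀ + m₁ ω + m₂ ω²` with integer coefficients, where `m_k` is the signed number of coordinates whose
phases differ by `k`. Since `1 + ω + ω² = 0`, such a sum vanishes as soon as `m₀ = m₁ = m₂`, and
this is a finite check on signs and exponents. The argument persists if the powers of `ω` are
replaced by the values of any nontrivial character of a finite abelian group. -/

section PhaseVec

variable {ι A 𝕜 : Type*} [AddCommGroup A] [RCLike 𝕜]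

/-- The vector with integer amplitudes `s` and phases `k`, a phase `a` standing for the scalar
`χ a`. -/
def phaseVec (χ : AddChar A 𝕜) (s : ι → ℤ) (k : ι → A) : ι → 𝕜 := fun i => s i * χ (k i)

theorem phaseVec_ne_zero (χ : AddChar A 𝕜) {s : ι → ℤ} (hs : s ≠ 0) (k : ι → A) :
    phaseVec χ s k ≠ 0 := by
  obtain ⟨i, hi⟩ := Function.ne_iff.mp hs
  exact Function.ne_iff.mpr
    ⟨i, mul_ne_zero (Int.cast_ne_zero.mpr hi) (χ.val_isUnit (k i)).ne_zero⟩

variable [Fintype ι] [DecidableEq A]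

/-- The coefficient of the phase `a` in the Hermitian inner product of the vectors with amplitudes
`s`, `t` and phases `k`, `l`, the first vector being the conjugated one. -/
def phaseWeight (s t : ι → ℤ) (k l : ι → A) (a : A) : ℤ :=
  ∑ i with l i - k i = a, s i * t i

theorem star_phaseVec_dotProduct_phaseVec [Fintype A] (χ : AddChar A 𝕜)
    (s t : ι → ℤ) (k l : ι → A) :
    star (phaseVec χ s k) ⬝ᵥ phaseVec χ t l = ∑ a, (phaseWeight s t k l a : 𝕜) * χ a := by
  have term (i : ι) : star (phaseVec χ s k i) * phaseVec χ t l i =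
      (s i * t i : ℤ) * χ (l i - k i) := by
    rw [phaseVec, phaseVec, star_mul', star_intCast, RCLike.star_def, ← AddChar.map_neg_eq_conj,
      sub_eq_add_neg, AddChar.map_add_eq_mul]
    push_cast
    ring
  calc star (phaseVec χ s k) ⬝ᵥ phaseVec χ t l
      = ∑ i, ((s i * t i : ℤ) : 𝕜) * χ (l i - k i) := Finset.sum_congr rfl fun i _ => term i
    _ = ∑ a, ∑ i with l i - k i = a, ((s i * t i : ℤ) : 𝕜) * χ (l i - k i) :=
        (Finset.sum_fiberwise _ _ _).symm
    _ = ∑ a, (phaseWeight s t k l a : 𝕜) * χ a := by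
        refine Finset.sum_congr rfl fun a _ => ?_
        rw [phaseWeight, Int.cast_sum, Finset.sum_mul]
        refine Finset.sum_congr rfl fun i hi => ?_
        rw [(Finset.mem_filter.mp hi).2]

theorem star_phaseVec_dotProduct_phaseVec_eq_zero [Finite A] {χ : AddChar A 𝕜} (hχ : χ ≠ 0)
    {s t : ι → ℤ} {k l : ι → A} (h : ∀ a, phaseWeight s t k l a = phaseWeight s t k l 0) :
    star (phaseVec χ s k) ⬝ᵥ phaseVec χ t l = 0 := by
  have := Fintype.ofFinite A
  simp_rw [star_phaseVec_dotProduct_phaseVec, h, ← Finset.mul_sum,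
    AddChar.sum_eq_zero_iff_ne_zero.mpr hχ, mul_zero]

end PhaseVec

theorem hdot_eq_star_dotProduct (u v : Fin 4 → ℂ) : hdot u v = star u ⬝ᵥ v := rfl

/-- The character `a ↦ ω ^ a` of `ZMod 3`, giving the entries of the Penrose vectors as phases. -/
noncomputable def cubicChar : AddChar (ZMod 3) ℂ := ZMod.stdAddChar

theorem cubicChar_ne_zero : cubicChar ≠ 0 :=
  AddChar.ne_zero_iff.mpr ⟨1, fun h =>
    absurd (ZMod.injective_stdAddChar (h.trans (AddChar.map_zero_eq_one _).symm)) (by decide)⟩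

theorem cubicChar_one : cubicChar 1 = ω := by
  simpa [cubicChar, ω] using ZMod.stdAddChar_coe (N := 3) 1

theorem cubicChar_two : cubicChar 2 = ω ^ 2 := by
  rw [← one_add_one_eq_two, AddChar.map_add_eq_mul, cubicChar_one, sq]

theorem penrose_vectors_eq_phaseVec :
    v1 = phaseVec cubicChar ![0, 0, 0, 1] ![0, 0, 0, 0] ∧
    v2 = phaseVec cubicChar ![0, 1, 1, 1] ![0, 0, 0, 0] ∧
    v3 = phaseVec cubicChar ![0, 0, 1, 0] ![0, 0, 0, 0] ∧
    v4 = phaseVec cubicChar ![1, -1, 1, 0] ![0, 0, 0, 0] ∧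
    v5 = phaseVec cubicChar ![1, 1, 0, -1] ![1, 0, 0, 0] ∧
    v6 = phaseVec cubicChar ![1, 0, -1, 1] ![1, 0, 0, 0] ∧
    v7 = phaseVec cubicChar ![0, 1, 0, 0] ![0, 0, 0, 0] ∧
    v8 = phaseVec cubicChar ![1, 0, -1, 1] ![0, 0, 0, 0] ∧
    v9 = phaseVec cubicChar ![1, 1, 0, -1] ![0, 1, 0, 0] ∧
    vA = phaseVec cubicChar ![1, -1, 1, 0] ![2, 0, 1, 0] ∧
    vB = phaseVec cubicChar ![-1, 1, -1, 0] ![0, 1, 0, 0] ∧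
    vC = phaseVec cubicChar ![0, 1, 1, 1] ![0, 0, 1, 2] ∧
    vD = phaseVec cubicChar ![1, 1, 0, -1] ![1, 2, 0, 0] ∧
    vE = phaseVec cubicChar ![1, 0, -1, 1] ![0, 0, 0, 1] ∧
    vF = phaseVec cubicChar ![1, 0, -1, 1] ![2, 0, 0, 1] ∧
    vG = phaseVec cubicChar ![-1, -1, 0, 1] ![0, 0, 0, 2] ∧
    vH = phaseVec cubicChar ![1, 0, -1, 1] ![0, 0, 0, 2] ∧
    vI = phaseVec cubicChar ![-1, 1, -1, 0] ![0, 2, 0, 0] ∧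
    vJ = phaseVec cubicChar ![1, -1, 1, 0] ![2, 0, 0, 0] ∧
    vK = phaseVec cubicChar ![1, 1, 0, -1] ![2, 0, 0, 0] ∧
    vL = phaseVec cubicChar ![1, -1, 1, 0] ![1, 0, 0, 0] ∧
    vM = phaseVec cubicChar ![1, 0, 0, 0] ![0, 0, 0, 0] ∧
    vN = phaseVec cubicChar ![1, 1, 0, -1] ![0, 0, 0, 0] ∧
    vO = phaseVec cubicChar ![-1, -1, 0, 1] ![0, 0, 0, 1] ∧
    vP = phaseVec cubicChar ![1, -1, 1, 0] ![1, 0, 2, 0] ∧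
    vQ = phaseVec cubicChar ![1, -1, 1, 0] ![0, 0, 2, 0] ∧
    vR = phaseVec cubicChar ![1, 0, -1, 1] ![2, 0, 0, 0] ∧
    vS = phaseVec cubicChar ![1, 1, 0, -1] ![0, 2, 0, 0] ∧
    vT = phaseVec cubicChar ![0, 1, 1, 1] ![0, 0, 0, 2] ∧
    vU = phaseVec cubicChar ![0, 1, 1, 1] ![0, 0, 1, 0] ∧
    vV = phaseVec cubicChar ![1, -1, 1, 0] ![0, 0, 1, 0] ∧
    vW = phaseVec cubicChar ![0, 1, 1, 1] ![0, 0, 2, 1] ∧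
    vX = phaseVec cubicChar ![1, 1, 0, -1] ![2, 1, 0, 0] ∧
    vY = phaseVec cubicChar ![0, 1, 1, 1] ![0, 0, 0, 1] ∧
    vZ = phaseVec cubicChar ![0, 1, 1, 1] ![0, 0, 2, 0] ∧
    va = phaseVec cubicChar ![0, 1, 1, 1] ![0, 1, 0, 0] ∧
    vb = phaseVec cubicChar ![-1, 0, 1, -1] ![0, 0, 2, 0] ∧
    vc = phaseVec cubicChar ![0, 1, 1, 1] ![0, 2, 0, 0] ∧
    vd = phaseVec cubicChar ![-1, 0, 1, -1] ![0, 0, 1, 0] ∧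
    ve = phaseVec cubicChar ![1, 0, -1, 1] ![1, 0, 0, 2] := by
  and_intros <;>
  · ext i
    fin_cases i <;> simp [phaseVec, cubicChar_one, cubicChar_two,
      v1, v2, v3, v4, v5, v6, v7, v8, v9, vA, vB, vC, vD, vE, vF, vG, vH, vI, vJ, vK, vL, vM, vN,
      vO, vP, vQ, vR, vS, vT, vU, vV, vW, vX, vY, vZ, va, vb, vc, vd, ve]

theorem ne_zero_of_mem_tuples : ∀ t ∈ tuples, ∀ v ∈ t, v ≠ 0 := by
  simp only [tuples, List.forall_mem_cons, List.not_mem_nil, false_imp_iff, implies_true, and_true,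
    penrose_vectors_eq_phaseVec]
  and_intros <;> exact phaseVec_ne_zero _ (by decide) _

theorem pairwise_hdot_eq_zero_of_mem_tuples :
    ∀ t ∈ tuples, t.Pairwise fun u v => hdot u v = 0 := by
  simp only [tuples, List.forall_mem_cons, List.pairwise_cons, List.Pairwise.nil,
    List.not_mem_nil, false_imp_iff, implies_true, and_true, penrose_vectors_eq_phaseVec,
    hdot_eq_star_dotProduct]
  and_intros <;> exact star_phaseVec_dotProduct_phaseVec_eq_zero cubicChar_ne_zero (by decide)

theorem penrose4040_ortho :
    ∀ t ∈ tuples, (∀ v ∈ t, v ≠ (0 : Fin 4 → ℂ)) ∧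
      List.Pairwise (fun u v => hdot u v = 0) t :=
  fun t ht => ⟨ne_zero_of_mem_tuples t ht, pairwise_hdot_eq_zero_of_mem_tuples t ht⟩
end
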